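/- arXiv:1111.3067 — 2 statements merged into one kernel-verified Lean document; each statement's English description precedes it below -/
import Mathlib

section
/- Let G be a countable group, Ω = [0,1]^G with the product σ-algebra and the action (γ·ω)(x) = ω(γ⁻¹x), and let μ be a G-invariant probability measure on Ω. Suppose R assigns to each ω ∈ Ω a binary relation R(ω) on G such that: for every x, y ∈ G the set {ω : (x,y) ∈ R(ω)} is measurable; for μ-a.e. ω, R(ω) is an equivalence relation on G; and R is equivariant, i.e. (x,y) ∈ R(ω) if and only if (γx, γy) ∈ R(γ·ω). Suppose further D assigns to each ω ∈ Ω a subset D(ω) ⊆ G such that {ω : x ∈ D(ω)} is measurable for each x ∈ G, D(γ·ω) = γ·D(ω), and for μ-a.e. ω, every R(ω)-equivalence class C satisfies that C ∩ D(ω) is finite and nonempty. Then for μ-a.e. ω, every R(ω)-equivalence class is finite. -/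
open MeasureTheory

/-!
Let every `x` spread one unit of mass uniformly over the distinguished elements of its class. By
the Mass-Transport Principle the expected mass received at a given `z` is the expected mass sent
from it, hence at most one, so almost surely every `z` receives finite mass. A distinguished
element of a class with exactly `n` distinguished elements receives `1 / n` from each member of the
class, so the class is finite.
-/

open scoped ENNReal

section MassTransport

variable {G : Type*} [Group G]

theorem tsum_eq_tsum_swap_of_mul_left_invariant {M : Type*} [AddCommMonoid M] [TopologicalSpace M]
    {F : G → G → M} (hF : ∀ γ x y, F (γ * x) (γ * y) = F x y) (o : G) :
    ∑' y, F o y = ∑' x, F x o := by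
  -- Translating the pair `(x, o)` by `o / x` moves its first entry to `o`.
  have translate (x : G) : F o (o / x * o) = F x o := by
    simpa only [div_mul_cancel] using hF (o / x) x o
  calc ∑' y, F o y = ∑' x, F o (o / x * o) :=
        (((Equiv.divLeft o).trans (Equiv.mulRight o)).tsum_eq (F o)).symm
    _ = ∑' x, F x o := tsum_congr translate

variable [Countable G] {Ω : Type*} [MeasurableSpace Ω] {μ : Measure Ω} {T : G → Ω → Ω}

theorem mass_transport_principle (hT : ∀ γ, MeasurePreserving (T γ) μ μ)
    {f : Ω → G → G → ℝ≥0∞} (hf : ∀ x y, Measurable fun ω => f ω x y)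
    (hinv : ∀ γ x y ω, f (T γ ω) (γ * x) (γ * y) = f ω x y) (o : G) :
    ∫⁻ ω, ∑' y, f ω o y ∂μ = ∫⁻ ω, ∑' x, f ω x o ∂μ := by
  have expectation_invariant (γ x y : G) :
      ∫⁻ ω, f ω (γ * x) (γ * y) ∂μ = ∫⁻ ω, f ω x y ∂μ := by
    rw [← (hT γ).lintegral_comp (hf (γ * x) (γ * y))]
    exact lintegral_congr (hinv γ x y)
  rw [lintegral_tsum fun y => (hf o y).aemeasurable, lintegral_tsum fun x => (hf x o).aemeasurable]
  exact tsum_eq_tsum_swap_of_mul_left_invariant (F := fun x y => ∫⁻ ω, f ω x y ∂μ)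
    expectation_invariant o

end MassTransport

section UniformTransport

variable {α β : Type*}

/-- The mass sent from `x` to `y` when every `x` spreads one unit of mass uniformly over the set
`s x`. Since `∞⁻¹ = 0`, nothing is sent from `x` when `s x` is infinite. -/
noncomputable def uniformTransport (s : α → Set β) (x : α) : β → ℝ≥0∞ :=
  (s x).indicator fun _ => ((s x).encard : ℝ≥0∞)⁻¹

theorem tsum_uniformTransport_le_one (s : α → Set β) (x : α) :
    ∑' y, uniformTransport s x y ≤ 1 := by
  rw [uniformTransport, ← tsum_subtype, ENNReal.tsum_set_const]
  exact ENNReal.mul_inv_le_one _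

theorem uniformTransport_of_eq_image {α' β' : Type*} {s : α → Set β} {t : α' → Set β'} {x : α}
    {x' : α'} {g : β → β'} (hg : g.Injective) (h : t x' = g '' s x) (y : β) :
    uniformTransport t x' (g y) = uniformTransport s x y := by
  classical
  simp only [uniformTransport, h, hg.encard_image, Set.indicator_apply, hg.mem_set_image]

theorem measurable_encard_of_measurableSet_mem [Countable β] {Ω : Type*} [MeasurableSpace Ω]
    {S : Ω → Set β} (hS : ∀ y, MeasurableSet {ω | y ∈ S ω}) :
    Measurable fun ω => ((S ω).encard : ℝ≥0∞) := by
  classical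
  have encard_eq_tsum (ω : Ω) : ((S ω).encard : ℝ≥0∞) = ∑' y, if y ∈ S ω then 1 else 0 := by
    rw [← ENNReal.tsum_set_one]
    exact tsum_subtype (S ω) fun _ => 1
  simp_rw [encard_eq_tsum]
  exact Measurable.tsum fun y => measurable_const.ite (hS y) measurable_const

theorem measurable_uniformTransport [Countable β] {Ω : Type*} [MeasurableSpace Ω]
    {S : Ω → α → Set β} {x : α} (hS : ∀ y, MeasurableSet {ω | y ∈ S ω x}) (y : β) :
    Measurable fun ω => uniformTransport (S ω) x y := by
  classical
  simp_rw [uniformTransport, Set.indicator_apply]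
  exact (measurable_encard_of_measurableSet_mem hS).inv.ite (hS y) measurable_const

theorem finite_setOf_eq_of_tsum_uniformTransport_ne_top {s : α → Set β} {z : β}
    (hz : ∑' x, uniformTransport s x z ≠ ∞) {t : Set β} (ht : t.Finite) (hzt : z ∈ t) :
    {x | s x = t}.Finite := by
  have card_inv_ne_zero : (t.encard : ℝ≥0∞)⁻¹ ≠ 0 := by
    simpa using ht
  refine (ENNReal.finite_const_le_of_tsum_ne_top hz card_inv_ne_zero).subset ?_
  rintro x rfl
  exact (Set.indicator_of_mem hzt fun _ => ((s x).encard : ℝ≥0∞)⁻¹).ge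

end UniformTransport

section Equivariant

variable {G Ω : Type*} [Group G] [Countable G] [MeasurableSpace Ω] {μ : Measure Ω}
  [IsFiniteMeasure μ] {T : G → Ω → Ω}

theorem ae_finite_setOf_eq_of_equivariant (hT : ∀ γ, MeasurePreserving (T γ) μ μ)
    {S : Ω → G → Set G} (hS : ∀ x y, MeasurableSet {ω | y ∈ S ω x})
    (hinv : ∀ γ x ω, S (T γ ω) (γ * x) = (γ * ·) '' S ω x) :
    ∀ᵐ ω ∂μ, ∀ t : Set G, t.Finite → t.Nonempty → {x | S ω x = t}.Finite := by
  have hmeas (x y : G) : Measurable fun ω => uniformTransport (S ω) x y :=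
    measurable_uniformTransport (hS x) y
  have expected_mass_in_ne_top (z : G) : ∫⁻ ω, ∑' x, uniformTransport (S ω) x z ∂μ ≠ ∞ := by
    refine ne_top_of_le_ne_top (measure_ne_top μ Set.univ) ?_
    calc ∫⁻ ω, ∑' x, uniformTransport (S ω) x z ∂μ
        = ∫⁻ ω, ∑' y, uniformTransport (S ω) z y ∂μ :=
          (mass_transport_principle hT hmeas (fun γ x y ω =>
            uniformTransport_of_eq_image (mul_right_injective γ) (hinv γ x ω) y) z).symm
      _ ≤ ∫⁻ _, 1 ∂μ := lintegral_mono fun ω => tsum_uniformTransport_le_one (S ω) z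
      _ = μ Set.univ := lintegral_one
  have mass_in_lt_top : ∀ᵐ ω ∂μ, ∀ z, ∑' x, uniformTransport (S ω) x z < ∞ :=
    ae_all_iff.2 fun z =>
      ae_lt_top (Measurable.tsum fun x => hmeas x z) (expected_mass_in_ne_top z)
  filter_upwards [mass_in_lt_top] with ω hω t ht ⟨z, hz⟩
  exact finite_setOf_eq_of_tsum_uniformTransport_ne_top (hω z).ne ht hz

theorem invariant_marked_classes_finite_general (hT : ∀ γ, MeasurePreserving (T γ) μ μ)
    {R : Ω → G → G → Prop} (hRmeas : ∀ x y, MeasurableSet {ω | R ω x y})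
    (hRequiv : ∀ᵐ ω ∂μ, Equivalence (R ω))
    (hRequivariant : ∀ γ x y ω, R ω x y ↔ R (T γ ω) (γ * x) (γ * y))
    {D : Ω → Set G} (hDmeas : ∀ x, MeasurableSet {ω | x ∈ D ω})
    (hDequivariant : ∀ γ ω, D (T γ ω) = (γ * ·) '' D ω) :
    ∀ᵐ ω ∂μ, ∀ x, ({y | R ω x y} ∩ D ω).Finite → ({y | R ω x y} ∩ D ω).Nonempty →
      {y | R ω x y}.Finite := by
  have class_equivariant (γ x : G) (ω : Ω) :
      {y | R (T γ ω) (γ * x) y} = (γ * ·) '' {y | R ω x y} := by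
    ext y
    simp [hRequivariant γ x (γ⁻¹ * y) ω]
  have marks_equivariant (γ x : G) (ω : Ω) :
      {y | R (T γ ω) (γ * x) y} ∩ D (T γ ω) = (γ * ·) '' ({y | R ω x y} ∩ D ω) := by
    rw [class_equivariant, hDequivariant, Set.image_inter (mul_right_injective γ)]
  filter_upwards [hRequiv, ae_finite_setOf_eq_of_equivariant hT
    (S := fun ω x => {y | R ω x y} ∩ D ω) (fun x y => (hRmeas x y).inter (hDmeas y))
    marks_equivariant] with ω hR hω x hfin hne
  refine (hω _ hfin hne).subset fun y (hxy : R ω x y) => ?_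
  have class_eq : {w | R ω y w} = {w | R ω x w} :=
    Set.ext fun w => ⟨hR.trans hxy, hR.trans (hR.symm hxy)⟩
  exact congrArg (· ∩ D ω) class_eq

end Equivariant

/-- **Finiteness of invariantly distinguished classes.**
Let `G` be a countable group acting on `Ω = [0,1]^G` by `(γ • ω) x = ω (γ⁻¹ * x)`, and let
`μ` be a `G`-invariant probability measure on `Ω`.  Suppose `R` assigns measurably and
equivariantly to each `ω` a relation on `G` which is a.e. an equivalence relation, and `D`
assigns measurably and equivariantly to each `ω` a subset of `G` such that a.e. every
`R ω`-equivalence class meets `D ω` in a finite nonempty set.  Then a.e. every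
`R ω`-equivalence class is finite. -/
theorem invariant_marked_classes_finite {G : Type*} [Group G] [Countable G]
    (μ : Measure (G → unitInterval)) [IsProbabilityMeasure μ]
    (hinv : ∀ γ : G, Measure.map (fun ω (x : G) => ω (γ⁻¹ * x)) μ = μ)
    (R : (G → unitInterval) → G → G → Prop)
    (hRmeas : ∀ x y : G, MeasurableSet {ω : G → unitInterval | R ω x y})
    (hRequiv : ∀ᵐ ω ∂μ, Equivalence (R ω))
    (hRequivariant : ∀ (γ x y : G) (ω : G → unitInterval),
      R ω x y ↔ R (fun z => ω (γ⁻¹ * z)) (γ * x) (γ * y))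
    (D : (G → unitInterval) → Set G)
    (hDmeas : ∀ x : G, MeasurableSet {ω : G → unitInterval | x ∈ D ω})
    (hDequivariant : ∀ (γ : G) (ω : G → unitInterval),
      D (fun z => ω (γ⁻¹ * z)) = (fun x => γ * x) '' D ω)
    (hDfin : ∀ᵐ ω ∂μ, ∀ x : G,
      ({y | R ω x y} ∩ D ω).Finite ∧ ({y | R ω x y} ∩ D ω).Nonempty) :
    ∀ᵐ ω ∂μ, ∀ x : G, {y | R ω x y}.Finite := by
  filter_upwards [invariant_marked_classes_finite_general (fun γ => ⟨by fun_prop, hinv γ⟩)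
    hRmeas hRequiv hRequivariant hDmeas hDequivariant, hDfin] with ω hω hfin x
  exact hω x (hfin x).1 (hfin x).2
end

section
/- Let T be a locally finite tree in which every vertex has degree at least 3, and let Π be a partition of the vertex set of T such that every cell of Π is finite, induces a connected subgraph of T, and contains at least 2 vertices. Then in the quotient graph T^Π every vertex (i.e. every cell) has degree at least 4. -/
/-- The quotient graph `T^Π` of a graph `T` by a partition `P` of its vertex set:
its vertices are the cells of `P`, and two distinct cells are adjacent iff some edge
of `T` joins a vertex of one to a vertex of the other. -/
def quotientGraph {V : Type*} (T : SimpleGraph V) (P : Set (Set V)) : SimpleGraph P :=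
  SimpleGraph.fromRel (fun C C' => ∃ u ∈ (C : Set V), ∃ v ∈ (C' : Set V), T.Adj u v)

/-! Contracting connected cells of a forest creates no multiple edges, since two edges between the
same pair of cells would close a cycle. So the degree of a cell `C` in the quotient is the number of
edges leaving `C`. As `C` spans a tree, `2 (|C| - 1)` of its edge ends stay inside, leaving
`∑ deg - 2 (|C| - 1)` outgoing edges; this is at least `|C| + 2 ≥ 4` when all degrees are at
least `3` and `|C| ≥ 2`. -/

theorem exists_four_of_four_le_encard {α : Type*} {s : Set α} (hs : 4 ≤ s.encard) :
    ∃ a b c d, a ≠ b ∧ a ≠ c ∧ a ≠ d ∧ b ≠ c ∧ b ≠ d ∧ c ≠ d ∧ a ∈ s ∧ b ∈ s ∧ c ∈ s ∧ d ∈ s := by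
  obtain ⟨t, hts, ht⟩ := Set.exists_subset_encard_eq hs
  have ht' : t.encard = 3 + 1 := by rw [ht]; norm_num
  obtain ⟨a, r, har, rfl, hr⟩ := Set.encard_eq_add_one_iff.1 ht'
  obtain ⟨b, c, d, hbc, hbd, hcd, rfl⟩ := Set.encard_eq_three.1 hr
  simp only [Set.mem_insert_iff, Set.mem_singleton_iff, not_or] at har
  simp only [Set.insert_subset_iff, Set.singleton_subset_iff] at hts
  exact ⟨a, b, c, d, har.1, har.2.1, har.2.2, hbc, hbd, hcd, hts⟩

section EdgeBoundary

variable {V : Type*} (G : SimpleGraph V) (C : Set V)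

/-- The edge boundary of a vertex set `C`: the edges of `G` leaving `C`, each encoded as the ordered
pair of its end in `C` and its end outside `C`. -/
def edgeBoundary : Set (V × V) :=
  {e | e.1 ∈ C ∧ G.Adj e.1 e.2 ∧ e.2 ∉ C}

theorem encard_edgeBoundary [Fintype C] :
    (edgeBoundary G C).encard = ∑ u : C, (G.neighborSet u \ C).encard := by
  have fibers : edgeBoundary G C = ⋃ u : C, Prod.mk (u : V) '' (G.neighborSet u \ C) := by
    ext ⟨u, v⟩
    simp [edgeBoundary, and_comm, and_left_comm]
  have disjoint_fibers :
      Pairwise fun u u' : C ↦ Disjoint (Prod.mk (u : V) '' (G.neighborSet u \ C))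
        (Prod.mk (u' : V) '' (G.neighborSet u' \ C)) := by
    intro u u' huu'
    rw [Set.disjoint_left]
    rintro _ ⟨v, -, rfl⟩ ⟨v', -, h⟩
    exact huu' (Subtype.ext (Prod.mk.inj h).1.symm)
  rw [fibers, Set.encard_iUnion_of_finite disjoint_fibers, finsum_eq_sum_of_fintype]
  exact Finset.sum_congr rfl fun u _ ↦ (Prod.mk_right_injective (u : V)).encard_image _

theorem encard_neighborSet_induce (u : C) :
    ((G.induce C).neighborSet u).encard = (G.neighborSet u ∩ C).encard := by
  rw [← Subtype.val_injective.encard_image]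
  congr 1
  ext v
  simp

theorem sum_encard_neighborSet [Fintype C] :
    ∑ u : C, (G.neighborSet u).encard =
      (edgeBoundary G C).encard + ∑ u : C, ((G.induce C).neighborSet u).encard := by
  simp only [encard_edgeBoundary, encard_neighborSet_induce, ← Finset.sum_add_distrib,
    Set.encard_sdiff_add_encard_inter]

end EdgeBoundary

section Acyclic

variable {V : Type*} {G : SimpleGraph V}

theorem encard_neighborSet_eq_degree (v : V) [Fintype (G.neighborSet v)] :
    (G.neighborSet v).encard = G.degree v := by
  rw [Set.encard_eq_coe_toFinset_card, Set.toFinset_card, G.card_neighborSet_eq_degree]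

theorem sum_encard_neighborSet_add_two_of_isTree [Fintype V] (hG : G.IsTree) :
    ∑ v, (G.neighborSet v).encard + 2 = 2 * Fintype.card V := by
  classical
  simp only [encard_neighborSet_eq_degree]
  rw [← hG.card_edgeFinset]
  exact_mod_cast congrArg (· + 2) G.sum_degrees_eq_twice_card_edges

theorem encard_edgeBoundary_add_two_mul_encard (hG : G.IsAcyclic) {C : Set V} [Fintype C]
    (hC : (G.induce C).Connected) :
    (edgeBoundary G C).encard + 2 * C.encard = ∑ u : C, (G.neighborSet u).encard + 2 := by
  rw [← Set.coe_fintypeCard C, ← sum_encard_neighborSet_add_two_of_isTree ⟨hC, hG.induce C⟩,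
    sum_encard_neighborSet, add_assoc]

theorem reachable_deleteEdges_of_preconnected_induce {C : Set V}
    (hC : (G.induce C).Preconnected) {s : Set (Sym2 V)}
    (hs : ∀ e ∈ s, ∃ v ∈ e, v ∉ C) {u v : V} (hu : u ∈ C) (hv : v ∈ C) :
    (G.deleteEdges s).Reachable u v := by
  let inclusion : G.induce C →g G.deleteEdges s :=
    { toFun := Subtype.val
      map_rel' := by
        intro a b hab
        refine (G.deleteEdges_adj).2 ⟨hab, fun he ↦ ?_⟩
        obtain ⟨w, hw, hwC⟩ := hs _ he
        rcases Sym2.mem_iff.1 hw with rfl | rfl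
        exacts [hwC a.2, hwC b.2] }
  exact (hC ⟨u, hu⟩ ⟨v, hv⟩).map inclusion

theorem eq_and_eq_of_adj_of_disjoint (hG : G.IsAcyclic) {C D : Set V} (hCD : Disjoint C D)
    (hC : (G.induce C).Preconnected) (hD : (G.induce D).Preconnected) {u u' v v' : V}
    (hu : u ∈ C) (hu' : u' ∈ C) (hv : v ∈ D) (hv' : v' ∈ D)
    (huv : G.Adj u v) (huv' : G.Adj u' v') : u = u' ∧ v = v' := by
  have hvC : v ∉ C := hCD.notMem_of_mem_right hv
  have huD : u ∉ D := hCD.notMem_of_mem_left hu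
  by_contra hne
  have reachable_uu' : (G.deleteEdges {s(u, v)}).Reachable u u' :=
    reachable_deleteEdges_of_preconnected_induce hC (by simp [hvC]) hu hu'
  have reachable_v'v : (G.deleteEdges {s(u, v)}).Reachable v' v :=
    reachable_deleteEdges_of_preconnected_induce hD (by simp [huD]) hv' hv
  have adj_u'v' : (G.deleteEdges {s(u, v)}).Adj u' v' := by
    refine (G.deleteEdges_adj).2 ⟨huv', fun he ↦ ?_⟩
    rcases Sym2.eq_iff.1 he with ⟨rfl, rfl⟩ | ⟨-, rfl⟩
    exacts [hne ⟨rfl, rfl⟩, huD hv']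
  exact SimpleGraph.isAcyclic_iff_forall_adj_isBridge.1 hG huv
    ((reachable_uu'.trans adj_u'v'.reachable).trans reachable_v'v)

end Acyclic

section QuotientGraph

variable {V : Type*} {T : SimpleGraph V} {P : Set (Set V)}

theorem quotientGraph_adj {C D : P} :
    (quotientGraph T P).Adj C D ↔
      C ≠ D ∧ ∃ u ∈ (C : Set V), ∃ v ∈ (D : Set V), T.Adj u v := by
  rw [quotientGraph, SimpleGraph.fromRel_adj]
  refine and_congr_right fun _ ↦ or_iff_left_of_imp ?_
  rintro ⟨v, hv, u, hu, hvu⟩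
  exact ⟨u, hu, v, hv, hvu.symm⟩

theorem encard_neighborSet_quotientGraph (hT : T.IsAcyclic) (hP : Setoid.IsPartition P)
    (hconn : ∀ C ∈ P, (T.induce C).Preconnected) (C : P) :
    ((quotientGraph T P).neighborSet C).encard = (edgeBoundary T C).encard := by
  choose cell cell_spec cell_unique using hP.2
  let outerCell (e : V × V) : P := ⟨cell e.2, (cell_spec e.2).1⟩
  have mem_outerCell (e : V × V) : e.2 ∈ (outerCell e : Set V) := (cell_spec e.2).2
  have disjoint_outerCell {e : V × V} (he : e ∈ edgeBoundary T C) :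
      Disjoint (C : Set V) (outerCell e) :=
    hP.pairwiseDisjoint C.2 (outerCell e).2 fun h ↦ he.2.2 (h ▸ mem_outerCell e)
  have image_outerCell :
      outerCell '' edgeBoundary T C = (quotientGraph T P).neighborSet C := by
    ext D
    rw [SimpleGraph.mem_neighborSet, quotientGraph_adj]
    constructor
    · rintro ⟨e, he, rfl⟩
      exact ⟨fun h ↦ he.2.2 (h ▸ mem_outerCell e), e.1, he.1, e.2, mem_outerCell e, he.2.1⟩
    · rintro ⟨hCD, u, hu, v, hv, huv⟩
      have hvC : v ∉ (C : Set V) := fun h ↦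
        hCD (Subtype.ext ((hP.2 v).unique ⟨C.2, h⟩ ⟨D.2, hv⟩))
      exact ⟨(u, v), ⟨hu, huv, hvC⟩, Subtype.ext (cell_unique v D ⟨D.2, hv⟩).symm⟩
  have injOn_outerCell : Set.InjOn outerCell (edgeBoundary T C) := by
    intro e he e' he' h
    exact Prod.ext_iff.2 <| eq_and_eq_of_adj_of_disjoint hT (disjoint_outerCell he)
      (hconn C C.2) (hconn _ (outerCell e).2) he.1 he'.1 (mem_outerCell e)
      (h ▸ mem_outerCell e') he.2.1 he'.2.1
  rw [← image_outerCell, injOn_outerCell.encard_image]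

theorem quotientGraph_min_degree_four_general (hT : T.IsAcyclic) (hP : Setoid.IsPartition P)
    (hconn : ∀ C ∈ P, (T.induce C).Connected) (C : P) (hC : (C : Set V).Finite) {k : ℕ∞}
    (hdeg : ∀ v ∈ (C : Set V), k + 2 ≤ (T.neighborSet v).encard) :
    k * (C : Set V).encard + 2 ≤ ((quotientGraph T P).neighborSet C).encard := by
  have := hC.fintype
  have sum_ge : (C : Set V).encard * (k + 2) ≤ ∑ u : (C : Set V), (T.neighborSet u).encard := by
    rw [← Set.coe_fintypeCard, ← nsmul_eq_mul]
    exact Finset.card_nsmul_le_sum _ _ _ fun u _ ↦ hdeg u u.2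
  have two_mul_ne_top : 2 * (C : Set V).encard ≠ ⊤ :=
    WithTop.mul_ne_top (ENat.ofNat_ne_top 2) hC.encard_lt_top.ne
  rw [encard_neighborSet_quotientGraph hT hP fun D hD ↦ (hconn D hD).preconnected,
    ← ENat.add_le_add_iff_right two_mul_ne_top]
  calc k * (C : Set V).encard + 2 + 2 * (C : Set V).encard
    _ = (C : Set V).encard * (k + 2) + 2 := by ring
    _ ≤ ∑ u : (C : Set V), (T.neighborSet u).encard + 2 := by gcongr
    _ = (edgeBoundary T C).encard + 2 * (C : Set V).encard :=
      (encard_edgeBoundary_add_two_mul_encard hT (hconn C C.2)).symm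

end QuotientGraph

/-- If `T` is a locally finite tree of minimum degree at least `3` and `Π` is a partition of
its vertex set all of whose cells are finite, induce connected subgraphs, and have at least
two vertices, then every vertex of the quotient graph `T^Π` has degree at least `4`, i.e.
has four distinct neighbors. -/
theorem quotientGraph_min_degree_four {V : Type*} (T : SimpleGraph V) [T.LocallyFinite]
    (hT : T.IsTree) (hdeg : ∀ v : V, 3 ≤ T.degree v)
    (P : Set (Set V)) (hP : Setoid.IsPartition P)
    (hfin : ∀ C ∈ P, C.Finite)
    (hconn : ∀ C ∈ P, (T.induce C).Connected)
    (htwo : ∀ C ∈ P, 2 ≤ C.ncard) :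
    ∀ C : P, ∃ D₁ D₂ D₃ D₄ : P,
      D₁ ≠ D₂ ∧ D₁ ≠ D₃ ∧ D₁ ≠ D₄ ∧ D₂ ≠ D₃ ∧ D₂ ≠ D₄ ∧ D₃ ≠ D₄ ∧
      (quotientGraph T P).Adj C D₁ ∧ (quotientGraph T P).Adj C D₂ ∧
      (quotientGraph T P).Adj C D₃ ∧ (quotientGraph T P).Adj C D₄ := by
  intro C
  have degree_ge (v : V) (_ : v ∈ (C : Set V)) : 1 + 2 ≤ (T.neighborSet v).encard := by
    rw [encard_neighborSet_eq_degree]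
    exact_mod_cast hdeg v
  have card_ge : 2 ≤ (C : Set V).encard := by
    rw [← (hfin C C.2).cast_ncard_eq]
    exact_mod_cast htwo C C.2
  apply exists_four_of_four_le_encard (s := (quotientGraph T P).neighborSet C)
  calc (4 : ℕ∞) = 1 * 2 + 2 := by norm_num
    _ ≤ 1 * (C : Set V).encard + 2 := by gcongr
    _ ≤ _ := quotientGraph_min_degree_four_general hT.isAcyclic hP hconn C (hfin C C.2) degree_ge
end
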